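/- arXiv:1105.0510 — 2 statements merged into one kernel-verified Lean document; each statement's English description precedes it below -/
import Mathlib

section
/- (Theorem 1, unanimous rejection group rule.) In the two-group voting model, for i ∈ {1,2} and every j ∈ S_i, the expected one-step actual capital increment under the rule that a proposal is accepted iff it is supported by at least one group satisfies E[X_j·1_{G₁ ∪ G₂}] = μ·F_{3−i} + (μ·F_i + σ_i·f_i)·(1 − F_{3−i}). -/
open MeasureTheory ProbabilityTheory Real Set

/-- Density of the standard normal distribution. -/
noncomputable def stdPdf (y : ℝ) : ℝ := (Real.sqrt (2 * Real.pi))⁻¹ * Real.exp (-(y ^ 2) / 2)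

/-- Cumulative distribution function of the standard normal distribution. -/
noncomputable def stdCdf (y : ℝ) : ℝ := ∫ x in Set.Iic y, stdPdf x

/-!
By independence of the two groups, `E[X_j; G₁ ∪ G₂] = μ·P(G₂) + E[X_j; G₁]·(1 − P(G₂))` for
`j ∈ S₁`. The increments `X_j` of one group are exchangeable, so all `j ∈ S₁` share the
same `E[X_j; A₁ > t₁]`, which is therefore `E[A₁; A₁ > t₁]`. This last quantity is the truncated
first moment of a normal law, computed by integrating `φ' = -x φ` after standardizing.
-/

section StandardNormal

lemma stdPdf_eq_gaussianPDFReal : stdPdf = gaussianPDFReal 0 1 := by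
  ext x
  simp [stdPdf, gaussianPDFReal]

lemma stdCdf_eq_measureReal_Iio (a : ℝ) : stdCdf a = (gaussianReal 0 1).real (Iio a) := by
  have := nullSingletonClass_gaussianReal (μ := 0) one_ne_zero
  rw [stdCdf, stdPdf_eq_gaussianPDFReal, measureReal_congr Iio_ae_eq_Iic, measureReal_def,
    gaussianReal_apply_eq_integral 0 one_ne_zero,
    ENNReal.toReal_ofReal (integral_nonneg (gaussianPDFReal_nonneg 0 1))]

lemma integrable_stdPdf : Integrable stdPdf :=
  stdPdf_eq_gaussianPDFReal ▸ integrable_gaussianPDFReal 0 1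

lemma integrable_stdPdf_mul_id : Integrable fun x ↦ stdPdf x * x := by
  convert! (integrable_mul_exp_neg_mul_sq one_half_pos).const_mul (√(2 * π))⁻¹ using 2 with x
  rw [stdPdf]
  ring_nf

lemma hasDerivAt_stdPdf (x : ℝ) : HasDerivAt stdPdf (-(stdPdf x * x)) x := by
  have hexponent : HasDerivAt (fun y : ℝ ↦ -(y ^ 2) / 2) (-x) x := by
    convert! (hasDerivAt_pow 2 x).neg.div_const 2 using 1
    ring
  convert! hexponent.exp.const_mul (√(2 * π))⁻¹ using 1
  rw [stdPdf]
  ring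

lemma setIntegral_Iio_id_gaussianReal (a : ℝ) :
    ∫ x in Iio a, x ∂gaussianReal 0 1 = -stdPdf a := by
  have hderiv : ∀ x ∈ Iic a, HasDerivAt stdPdf (-(stdPdf x * x)) x :=
    fun x _ ↦ hasDerivAt_stdPdf x
  have hint : IntegrableOn (fun x ↦ -(stdPdf x * x)) (Iic a) :=
    integrable_stdPdf_mul_id.neg.integrableOn
  have hlim := tendsto_zero_of_hasDerivAt_of_integrableOn_Iic hderiv hint
    integrable_stdPdf.integrableOn
  calc ∫ x in Iio a, x ∂gaussianReal 0 1
      = ∫ x in Iio a, stdPdf x * x := by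
        rw [gaussianReal_of_var_ne_zero 0 one_ne_zero,
          setIntegral_withDensity_eq_setIntegral_toReal_smul (measurable_gaussianPDF 0 1)
            (ae_of_all _ fun _ ↦ gaussianPDF_lt_top) _ measurableSet_Iio]
        simp only [toReal_gaussianPDF, stdPdf_eq_gaussianPDFReal, smul_eq_mul]
    _ = -∫ x in Iic a, -(stdPdf x * x) := by
        rw [integral_neg, neg_neg, integral_Iic_eq_integral_Iio]
    _ = -stdPdf a := by
        rw [integral_Iic_of_hasDerivAt_of_tendsto' hderiv hint hlim, sub_zero]

end StandardNormal

section NormalVariable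

variable {Ω : Type*} {mΩ : MeasurableSpace Ω} {P : Measure Ω} {Y : Ω → ℝ} {m s : ℝ}

lemma hasLaw_gaussianReal_standardize (hs : s ≠ 0)
    (hY : HasLaw Y (gaussianReal m (s ^ 2).toNNReal) P) :
    HasLaw (fun ω ↦ (m - Y ω) / s) (gaussianReal 0 1) P := by
  convert! gaussianReal_div_const (gaussianReal_const_sub hY m) s using 2
  · simp
  · ext
    simp [sq_nonneg, hs]

lemma setOf_lt_eq_standardize_preimage_Iio (hs : 0 < s) (t : ℝ) :
    {ω | t < Y ω} = (fun ω ↦ (m - Y ω) / s) ⁻¹' Iio ((m - t) / s) := by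
  ext ω
  simp [div_lt_div_iff_of_pos_right hs]

lemma measureReal_setOf_lt_of_hasLaw_gaussianReal (hs : 0 < s)
    (hY : HasLaw Y (gaussianReal m (s ^ 2).toNNReal) P) (t : ℝ) :
    P.real {ω | t < Y ω} = stdCdf ((m - t) / s) := by
  rw [setOf_lt_eq_standardize_preimage_Iio hs, stdCdf_eq_measureReal_Iio]
  exact (hasLaw_gaussianReal_standardize hs.ne' hY).measureReal_eq measurableSet_Iio

lemma setIntegral_setOf_lt_of_hasLaw_gaussianReal (hs : 0 < s)
    (hY : HasLaw Y (gaussianReal m (s ^ 2).toNNReal) P) (t : ℝ) :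
    ∫ ω in {ω | t < Y ω}, Y ω ∂P
      = m * stdCdf ((m - t) / s) + s * stdPdf ((m - t) / s) := by
  set Z : Ω → ℝ := fun ω ↦ (m - Y ω) / s
  have hZ : HasLaw Z (gaussianReal 0 1) P := hasLaw_gaussianReal_standardize hs.ne' hY
  have hYZ (ω : Ω) : Y ω = m - s * Z ω := by
    simp only [Z]
    field_simp
    ring
  have hid : Integrable (fun z : ℝ ↦ z) (gaussianReal 0 1) :=
    (memLp_id_gaussianReal 1).integrable le_rfl
  calc ∫ ω in {ω | t < Y ω}, Y ω ∂P
      = ∫ ω in Z ⁻¹' Iio ((m - t) / s), (m - s * Z ω) ∂P := by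
        rw [setOf_lt_eq_standardize_preimage_Iio (m := m) hs]
        simp only [← hYZ, Z]
    _ = ∫ z in Iio ((m - t) / s), (m - s * z) ∂gaussianReal 0 1 := by
        rw [← hZ.map_eq, setIntegral_map measurableSet_Iio (by fun_prop) hZ.aemeasurable]
    _ = m * stdCdf ((m - t) / s) + s * stdPdf ((m - t) / s) := by
        rw [integral_sub (integrable_const m) (hid.const_mul s).integrableOn, setIntegral_const,
          integral_const_mul, setIntegral_Iio_id_gaussianReal, ← stdCdf_eq_measureReal_Iio,
          smul_eq_mul]
        ring

end NormalVariable

section PairedVariables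

variable {Ω Ω' E 𝓨 𝓩 : Type*} {mΩ : MeasurableSpace Ω} {mΩ' : MeasurableSpace Ω'}
  [MeasurableSpace 𝓨] [MeasurableSpace 𝓩] {P : Measure Ω} {P' : Measure Ω'}

lemma setIntegral_preimage_eq_of_identDistrib_prodMk [NormedAddCommGroup E] [NormedSpace ℝ E]
    [MeasurableSpace E] [BorelSpace E] {U : Ω → E} {V : Ω → 𝓨} {U' : Ω' → E} {V' : Ω' → 𝓨}
    (h : IdentDistrib (fun ω ↦ (U ω, V ω)) (fun ω ↦ (U' ω, V' ω)) P P')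
    {B : Set 𝓨} (hB : MeasurableSet B) :
    ∫ ω in V ⁻¹' B, U ω ∂P = ∫ ω in V' ⁻¹' B, U' ω ∂P' := by
  have hind : Measurable ((Prod.snd ⁻¹' B).indicator (Prod.fst : E × 𝓨 → E)) :=
    measurable_fst.indicator (measurable_snd hB)
  rw [← integral_indicator₀ (h.aemeasurable_fst.snd.nullMeasurable hB),
    ← integral_indicator₀ (h.aemeasurable_snd.snd.nullMeasurable hB)]
  exact (h.comp hind).integral_eq

lemma setIntegral_union_preimage_of_indepFun_prodMk [IsProbabilityMeasure P]
    {U : Ω → ℝ} {V : Ω → 𝓨} {Z : Ω → 𝓩} (hindep : IndepFun (fun ω ↦ (U ω, V ω)) Z P)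
    (hU : Measurable U) (hV : Measurable V) (hZ : Measurable Z) (hint : Integrable U P)
    {B : Set 𝓨} (hB : MeasurableSet B) {C : Set 𝓩} (hC : MeasurableSet C) :
    ∫ ω in V ⁻¹' B ∪ Z ⁻¹' C, U ω ∂P
      = P.real (Z ⁻¹' C) * ∫ ω, U ω ∂P
        + (1 - P.real (Z ⁻¹' C)) * ∫ ω in V ⁻¹' B, U ω ∂P := by
  have hfactor {D : Set 𝓩} (hD : MeasurableSet D) {f : ℝ × 𝓨 → ℝ} (hf : Measurable f) :
      ∫ ω in Z ⁻¹' D, f (U ω, V ω) ∂P = P.real (Z ⁻¹' D) * ∫ ω, f (U ω, V ω) ∂P :=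
    Indep.setIntegral_eq_mul hZ.comap_le hindep.symm (hU.prodMk hV).aemeasurable
      ⟨D, hD, rfl⟩ hf.aestronglyMeasurable
  have hdiff : ∫ ω in V ⁻¹' B \ Z ⁻¹' C, U ω ∂P
      = (1 - P.real (Z ⁻¹' C)) * ∫ ω in V ⁻¹' B, U ω ∂P := by
    rw [sdiff_eq, inter_comm, ← setIntegral_indicator (hV hB), ← integral_indicator (hV hB),
      ← probReal_compl_eq_one_sub (hZ hC)]
    exact hfactor hC.compl (measurable_fst.indicator (measurable_snd hB))
  rw [← sdiff_union_self, union_comm, setIntegral_union disjoint_sdiff_right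
    ((hV hB).diff (hZ hC)) hint.integrableOn hint.integrableOn, hdiff,
    hfactor hC measurable_fst]

end PairedVariables

section GroupMean

variable {Ω ι : Type*}

/-- The average `A_i` of the increments `X j` over a group `S`; it is `0` for the empty group. -/
noncomputable def groupMean (X : ι → Ω → ℝ) (S : Finset ι) (ω : Ω) : ℝ :=
  (S.card : ℝ)⁻¹ * ∑ j ∈ S, X j ω

variable {mΩ : MeasurableSpace Ω} {P : Measure Ω} {X : ι → Ω → ℝ} {S T : Finset ι} {j k : ι}

lemma groupMean_eq_sum_coe_sort (X : ι → Ω → ℝ) (S : Finset ι) :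
    groupMean X S = fun ω ↦ (S.card : ℝ)⁻¹ * ∑ i : S, X i ω := by
  ext ω
  rw [groupMean, Finset.sum_coe_sort S (X · ω)]

lemma measurable_groupMean (hmeas : ∀ j, Measurable (X j)) (S : Finset ι) :
    Measurable (groupMean X S) := by
  unfold groupMean
  fun_prop

lemma indepFun_prodMk_groupMean (hindep : iIndepFun X P) (hmeas : ∀ j, Measurable (X j))
    (hST : Disjoint S T) (hj : j ∈ S) :
    IndepFun (fun ω ↦ (X j ω, groupMean X S ω)) (groupMean X T) P := by
  simp only [groupMean_eq_sum_coe_sort X]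
  exact (hindep.indepFun_finset S T hST hmeas).comp
    (φ := fun y ↦ (y ⟨j, hj⟩, (S.card : ℝ)⁻¹ * ∑ i, y i))
    (ψ := fun y ↦ (T.card : ℝ)⁻¹ * ∑ i, y i) (by fun_prop) (by fun_prop)

lemma identDistrib_prodMk_groupMean (hindep : iIndepFun X P)
    (hident : ∀ i ∈ S, ∀ i' ∈ S, IdentDistrib (X i) (X i') P P) (hj : j ∈ S) (hk : k ∈ S) :
    IdentDistrib (fun ω ↦ (X j ω, groupMean X S ω)) (fun ω ↦ (X k ω, groupMean X S ω)) P P := by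
  classical
  let e : Equiv.Perm S := Equiv.swap ⟨j, hj⟩ ⟨k, hk⟩
  have hperm : IdentDistrib (fun ω (i : S) ↦ X i ω) (fun ω (i : S) ↦ X (e i) ω) P P :=
    IdentDistrib.pi (fun i ↦ hident i i.2 (e i) (e i).2)
      (hindep.precomp Subtype.val_injective)
      (hindep.precomp (Subtype.val_injective.comp e.injective))
  have hpair := hperm.comp (u := fun y ↦ (y ⟨j, hj⟩, (S.card : ℝ)⁻¹ * ∑ i, y i)) (by fun_prop)
  have hsum (ω : Ω) : ∑ i, X (e i) ω = ∑ i : S, X i ω := Equiv.sum_comp e fun i : S ↦ X i ω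
  simpa only [Function.comp_def, hsum, e, Equiv.swap_apply_left, groupMean_eq_sum_coe_sort X]
    using hpair

lemma setIntegral_preimage_groupMean_eq_groupMean (hindep : iIndepFun X P)
    (hident : ∀ i ∈ S, ∀ i' ∈ S, IdentDistrib (X i) (X i') P P)
    (hint : ∀ i ∈ S, Integrable (X i) P) (hj : j ∈ S) {B : Set ℝ} (hB : MeasurableSet B) :
    ∫ ω in groupMean X S ⁻¹' B, X j ω ∂P
      = ∫ ω in groupMean X S ⁻¹' B, groupMean X S ω ∂P := by
  have hcard : (S.card : ℝ) ≠ 0 := Nat.cast_ne_zero.mpr (Finset.card_ne_zero_of_mem hj)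
  have hexch : ∀ i ∈ S, ∫ ω in groupMean X S ⁻¹' B, X i ω ∂P
      = ∫ ω in groupMean X S ⁻¹' B, X j ω ∂P := fun i hi ↦
    setIntegral_preimage_eq_of_identDistrib_prodMk
      (identDistrib_prodMk_groupMean hindep hident hi hj) hB
  symm
  calc ∫ ω in groupMean X S ⁻¹' B, groupMean X S ω ∂P
      = (S.card : ℝ)⁻¹ * ∑ i ∈ S, ∫ ω in groupMean X S ⁻¹' B, X i ω ∂P := by
        rw [← integral_finsetSum S fun i hi ↦ (hint i hi).integrableOn, ← integral_const_mul]
        rfl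
    _ = ∫ ω in groupMean X S ⁻¹' B, X j ω ∂P := by
        rw [Finset.sum_congr rfl hexch, Finset.sum_const, nsmul_eq_mul,
          inv_mul_cancel_left₀ hcard]

lemma hasLaw_sum_gaussianReal {m : ι → ℝ} {v : ι → NNReal} (hindep : iIndepFun X P)
    (hlaw : ∀ i, HasLaw (X i) (gaussianReal (m i) (v i)) P) (S : Finset ι) :
    HasLaw (∑ i ∈ S, X i) (gaussianReal (∑ i ∈ S, m i) (∑ i ∈ S, v i)) P := by
  classical
  have := hindep.isProbabilityMeasure
  induction S using Finset.induction_on with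
  | empty =>
    simpa using hasLaw_dirac_of_ae_eq (P := P) (X := 0) (x := (0 : ℝ)) ae_eq_rfl
  | insert a S ha ih =>
    have hindepa : IndepFun (X a) (∑ i ∈ S, X i) P :=
      (hindep.indepFun_finsetSum_of_notMem₀ (fun i ↦ (hlaw i).aemeasurable) ha).symm
    simpa only [Finset.sum_insert ha, gaussianReal_conv_gaussianReal]
      using hindepa.hasLaw_add (hlaw a) ih

variable {m s : ℝ}

lemma hasLaw_groupMean_gaussianReal (hindep : iIndepFun X P)
    (hlaw : ∀ i, HasLaw (X i) (gaussianReal m (s ^ 2).toNNReal) P) (hS : S.Nonempty) :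
    HasLaw (groupMean X S) (gaussianReal m ((s / √S.card) ^ 2).toNNReal) P := by
  have hcard : (S.card : ℝ) ≠ 0 := Nat.cast_ne_zero.mpr hS.card_ne_zero
  convert! gaussianReal_const_mul (hasLaw_sum_gaussianReal hindep hlaw S) (S.card : ℝ)⁻¹ using 2
  · simp [groupMean]
  · simp [hcard]
  · ext
    simp only [Finset.sum_const, nsmul_eq_mul, NNReal.coe_mul, NNReal.coe_natCast, NNReal.coe_mk,
      Real.coe_toNNReal _ (sq_nonneg _)]
    rw [div_pow, Real.sq_sqrt (Nat.cast_nonneg _)]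
    field_simp

lemma div_sqrt_card_pos (hs : 0 < s) (hS : S.Nonempty) : 0 < s / √S.card :=
  div_pos hs (Real.sqrt_pos.mpr (Nat.cast_pos.mpr hS.card_pos))

lemma setIntegral_setOf_lt_groupMean_gaussianReal (hs : 0 < s) (hindep : iIndepFun X P)
    (hlaw : ∀ i, HasLaw (X i) (gaussianReal m (s ^ 2).toNNReal) P) (hj : j ∈ S) (t : ℝ) :
    ∫ ω in {ω | t < groupMean X S ω}, X j ω ∂P
      = m * stdCdf ((m - t) / (s / √S.card))
        + s / √S.card * stdPdf ((m - t) / (s / √S.card)) := by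
  have hS : S.Nonempty := ⟨j, hj⟩
  calc ∫ ω in {ω | t < groupMean X S ω}, X j ω ∂P
      = ∫ ω in {ω | t < groupMean X S ω}, groupMean X S ω ∂P :=
        setIntegral_preimage_groupMean_eq_groupMean hindep
          (fun i _ i' _ ↦ (hlaw i).identDistrib (hlaw i'))
          (fun i _ ↦ (hlaw i).hasGaussianLaw.integrable) hj measurableSet_Ioi
    _ = m * stdCdf ((m - t) / (s / √S.card))
        + s / √S.card * stdPdf ((m - t) / (s / √S.card)) :=
        setIntegral_setOf_lt_of_hasLaw_gaussianReal (div_sqrt_card_pos hs hS)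
          (hasLaw_groupMean_gaussianReal hindep hlaw hS) t

lemma setIntegral_union_groupMean_gaussianReal (hs : 0 < s) (hindep : iIndepFun X P)
    (hmeas : ∀ i, Measurable (X i))
    (hlaw : ∀ i, HasLaw (X i) (gaussianReal m (s ^ 2).toNNReal) P)
    (hST : Disjoint S T) (hT : T.Nonempty) (hj : j ∈ S) (t u : ℝ) :
    ∫ ω in {ω | t < groupMean X S ω} ∪ {ω | u < groupMean X T ω}, X j ω ∂P
      = m * stdCdf ((m - u) / (s / √T.card))
        + (m * stdCdf ((m - t) / (s / √S.card)) + s / √S.card * stdPdf ((m - t) / (s / √S.card)))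
          * (1 - stdCdf ((m - u) / (s / √T.card))) := by
  have := hindep.isProbabilityMeasure
  have hmean : ∫ ω, X j ω ∂P = m := (hlaw j).integral_eq.trans integral_id_gaussianReal
  have hprob : P.real {ω | u < groupMean X T ω} = stdCdf ((m - u) / (s / √T.card)) :=
    measureReal_setOf_lt_of_hasLaw_gaussianReal (div_sqrt_card_pos hs hT)
      (hasLaw_groupMean_gaussianReal hindep hlaw hT) u
  have hunion := setIntegral_union_preimage_of_indepFun_prodMk
    (indepFun_prodMk_groupMean hindep hmeas hST hj) (hmeas j) (measurable_groupMean hmeas S)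
    (measurable_groupMean hmeas T) (hlaw j).hasGaussianLaw.integrable
    (measurableSet_Ioi (a := t)) (measurableSet_Ioi (a := u))
  change ∫ ω in {ω | t < groupMean X S ω} ∪ {ω | u < groupMean X T ω}, X j ω ∂P
    = P.real {ω | u < groupMean X T ω} * _ + (1 - P.real {ω | u < groupMean X T ω})
      * ∫ ω in {ω | t < groupMean X S ω}, X j ω ∂P at hunion
  rw [hunion, hprob, hmean,
    setIntegral_setOf_lt_groupMean_gaussianReal hs hindep hlaw hj]
  ring

end GroupMean

/-- Theorem 1, unanimous rejection group rule: for `i ∈ {1,2}` and every `j ∈ S_i`,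
`E[X_j·1_{G₁ ∪ G₂}] = μ·F_{3−i} + (μ·F_i + σ_i·f_i)·(1 − F_{3−i})`. -/
theorem expected_increment_unanimous_rejection
    {Ω ι : Type*} [MeasureSpace Ω] [IsProbabilityMeasure (ℙ : Measure Ω)]
    (μ σ : ℝ) (hσ : 0 < σ)
    (X : ι → Ω → ℝ) (hmeas : ∀ j, Measurable (X j))
    (hindep : iIndepFun X ℙ)
    (hdist : ∀ j, Measure.map (X j) ℙ = gaussianReal μ ((σ ^ 2).toNNReal))
    (S₁ S₂ : Finset ι) (hdisj : Disjoint S₁ S₂)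
    (g₁ g₂ : ℕ) (hcard₁ : S₁.card = g₁) (hcard₂ : S₂.card = g₂)
    (hg₁ : 1 ≤ g₁) (hg₂ : 1 ≤ g₂)
    (t₁ t₂ : ℝ)
    (A₁ A₂ : Ω → ℝ)
    (hA₁ : A₁ = fun ω => (g₁ : ℝ)⁻¹ * ∑ j ∈ S₁, X j ω)
    (hA₂ : A₂ = fun ω => (g₂ : ℝ)⁻¹ * ∑ j ∈ S₂, X j ω)
    :
    (∀ j ∈ S₁, ∫ ω in {ω | t₁ < A₁ ω} ∪ {ω | t₂ < A₂ ω}, X j ω =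
      μ * stdCdf ((μ - t₂) / (σ / Real.sqrt g₂)) + (μ * stdCdf ((μ - t₁) / (σ / Real.sqrt g₁)) + (σ / Real.sqrt g₁) * stdPdf ((μ - t₁) / (σ / Real.sqrt g₁))) * (1 - stdCdf ((μ - t₂) / (σ / Real.sqrt g₂)))) ∧
    (∀ j ∈ S₂, ∫ ω in {ω | t₁ < A₁ ω} ∪ {ω | t₂ < A₂ ω}, X j ω =
      μ * stdCdf ((μ - t₁) / (σ / Real.sqrt g₁)) + (μ * stdCdf ((μ - t₂) / (σ / Real.sqrt g₂)) + (σ / Real.sqrt g₂) * stdPdf ((μ - t₂) / (σ / Real.sqrt g₂))) * (1 - stdCdf ((μ - t₁) / (σ / Real.sqrt g₁)))) := by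
  subst hA₁ hA₂ hcard₁ hcard₂
  have hlaw (i : ι) : HasLaw (X i) (gaussianReal μ (σ ^ 2).toNNReal) ℙ :=
    ⟨(hmeas i).aemeasurable, hdist i⟩
  refine ⟨fun j hj ↦ ?_, fun j hj ↦ ?_⟩
  · exact setIntegral_union_groupMean_gaussianReal hσ hindep hmeas hlaw hdisj
      (Finset.card_pos.mp hg₂) hj t₁ t₂
  · rw [union_comm]
    exact setIntegral_union_groupMean_gaussianReal hσ hindep hmeas hlaw hdisj.symm
      (Finset.card_pos.mp hg₁) hj t₂ t₁
end

section
/- (Corollary 3, first part.) In the two-group voting model with μ = 0, fix t₁ ∈ ℝ and let t ∈ ℝ. Then for every j ∈ S₁, the expected actual capital increment of member j under the unanimous rejection rule with Group 2 threshold t equals that under the unanimous acceptance rule with Group 2 threshold −t: E[X_j·1_{{A₁>t₁} ∪ {A₂>t}}] = E[X_j·1_{{A₁>t₁} ∩ {A₂>−t}}]. -/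
open MeasureTheory ProbabilityTheory Real Set

/-!
Group 1 is independent of `A₂`, and `E[X_j] = 0`. Splitting off the event `G₁ = {A₁ > t₁}`,
`E[X_j; G₁ ∪ {A₂ > t}] = E[X_j; G₁] + P(A₂ > t) E[X_j; G₁ᶜ] = P(A₂ ≤ t) E[X_j; G₁]`, whereas
`E[X_j; G₁ ∩ {A₂ > -t}] = P(A₂ > -t) E[X_j; G₁]`. The two probabilities agree because the law of
`A₂` is symmetric and does not charge `t`.
-/

section SetIntegral

variable {Ω α β E : Type*} [MeasurableSpace Ω] [MeasurableSpace α] [MeasurableSpace β]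
  [NormedAddCommGroup E] [NormedSpace ℝ E] {P : Measure Ω} {Z : Ω → α} {W : Ω → β} {f : α → E}
  {B : Set α} {C : Set β}

lemma setIntegral_preimage_inter_preimage_of_indepFun (hZW : IndepFun Z W P) (hZ : Measurable Z)
    (hW : Measurable W) (hf : AEStronglyMeasurable f (P.map Z)) (hB : MeasurableSet B)
    (hC : MeasurableSet C) :
    ∫ ω in Z ⁻¹' B ∩ W ⁻¹' C, f (Z ω) ∂P = P.real (W ⁻¹' C) • ∫ ω in Z ⁻¹' B, f (Z ω) ∂P := by
  have hindicator : (fun ω ↦ B.indicator f (Z ω)) = (Z ⁻¹' B).indicator (fun ω ↦ f (Z ω)) := rfl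
  have hfactor := Indep.setIntegral_eq_smul hW.comap_le hZW.symm hZ.aemeasurable
    ⟨C, hC, rfl⟩ (hf.indicator hB)
  rwa [hindicator, setIntegral_indicator (hZ hB), integral_indicator (hZ hB), inter_comm]
    at hfactor

lemma setIntegral_preimage_union_preimage_of_indepFun (hZW : IndepFun Z W P) (hZ : Measurable Z)
    (hW : Measurable W) (hf : AEStronglyMeasurable f (P.map Z))
    (hint : Integrable (fun ω ↦ f (Z ω)) P) (hmean : ∫ ω, f (Z ω) ∂P = 0) (hB : MeasurableSet B)
    (hC : MeasurableSet C) :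
    ∫ ω in Z ⁻¹' B ∪ W ⁻¹' C, f (Z ω) ∂P = P.real (W ⁻¹' Cᶜ) • ∫ ω in Z ⁻¹' B, f (Z ω) ∂P := by
  have hunion : Z ⁻¹' B ∪ W ⁻¹' C = (Z ⁻¹' Bᶜ ∩ W ⁻¹' Cᶜ)ᶜ := by
    simp only [preimage_compl, compl_inter, compl_compl]
  rw [hunion, setIntegral_compl ((hZ hB.compl).inter (hW hC.compl)) hint, hmean,
    setIntegral_preimage_inter_preimage_of_indepFun hZW hZ hW hf hB.compl hC.compl,
    preimage_compl (s := B), setIntegral_compl (hZ hB) hint, hmean, zero_sub, zero_sub, smul_neg,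
    neg_neg]

end SetIntegral

section Symmetric

lemma isNegInvariant_map_of_odd {α β : Type*} [Neg α] [MeasurableSpace α] [MeasurableNeg α]
    [Neg β] [MeasurableSpace β] [MeasurableNeg β] {μ : Measure α} [μ.IsNegInvariant]
    {T : α → β} (hT : Measurable T) (hodd : ∀ x, T (-x) = -T x) : (μ.map T).IsNegInvariant where
  neg_eq_self :=
    calc (μ.map T).map Neg.neg = (μ.map Neg.neg).map T := by
          rw [Measure.map_map measurable_neg hT, Measure.map_map hT measurable_neg]
          exact congrArg μ.map (funext fun x ↦ (hodd x).symm)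
      _ = μ.map T := by rw [Measure.map_neg_eq_self]

lemma isNegInvariant_map_pi_of_iIndepFun {Ω ι : Type*} [MeasurableSpace Ω] [Finite ι]
    {G : ι → Type*} [∀ i, AddGroup (G i)] [∀ i, MeasurableSpace (G i)] [∀ i, MeasurableNeg (G i)]
    {P : Measure Ω} {X : ∀ i, Ω → G i} (hX : ∀ i, AEMeasurable (X i) P) (hindep : iIndepFun X P)
    (hsymm : ∀ i, (P.map (X i)).IsNegInvariant) :
    (P.map fun ω i ↦ X i ω).IsNegInvariant := by
  have := hindep.isProbabilityMeasure
  have := Fintype.ofFinite ι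
  rw [hindep.map_fun_eq_pi_map hX]
  infer_instance

lemma measure_Iic_eq_measure_Ioi_neg {G : Type*} [AddCommGroup G] [PartialOrder G]
    [IsOrderedAddMonoid G] [MeasurableSpace G] [MeasurableNeg G] {μ : Measure G}
    [μ.IsNegInvariant] {t : G} (ht : μ {t} = 0) : μ (Iic t) = μ (Ioi (-t)) :=
  calc μ (Iic t) = μ (Iio t) := measure_congr (Iio_ae_eq_Iic' ht).symm
    _ = μ (-Ioi (-t)) := by rw [Set.neg_Ioi, neg_neg]
    _ = μ (Ioi (-t)) := μ.measure_neg _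

instance isNegInvariant_gaussianReal_zero (v : NNReal) : (gaussianReal 0 v).IsNegInvariant where
  neg_eq_self := gaussianReal_map_neg.trans (by rw [neg_zero])

end Symmetric

section Atomless

lemma nullSingletonClass_conv {G : Type*} [AddGroup G] [MeasurableSpace G] [MeasurableAdd₂ G]
    [MeasurableSingletonClass G] (μ ν : Measure G) [NullSingletonClass μ] [SFinite μ] [SFinite ν] :
    NullSingletonClass (μ ∗ ν) where
  measure_singleton x := by
    have hslice (y : G) : (fun z ↦ (z, y)) ⁻¹' ((fun p : G × G ↦ p.1 + p.2) ⁻¹' {x}) = {x - y} := by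
      ext z
      simp [eq_sub_iff_add_eq]
    rw [Measure.conv, Measure.map_apply measurable_add (measurableSet_singleton x),
      Measure.prod_apply_symm (measurable_add (measurableSet_singleton x))]
    simp only [hslice, measure_singleton, lintegral_zero]

lemma measure_sum_eq_eq_zero_of_iIndepFun {Ω ι G : Type*} [MeasurableSpace Ω] [Fintype ι]
    [AddCommGroup G] [MeasurableSpace G] [MeasurableAdd₂ G] [MeasurableSingletonClass G]
    {P : Measure Ω} {X : ι → Ω → G} (hX : ∀ i, Measurable (X i)) (hindep : iIndepFun X P) (k : ι)
    [NullSingletonClass (P.map (X k))] (x : G) : P {ω | ∑ i, X i ω = x} = 0 := by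
  classical
  have := hindep.isProbabilityMeasure
  have hk : IndepFun (X k) (∑ i ∈ Finset.univ.erase k, X i) P :=
    (hindep.indepFun_finsetSum_of_notMem hX (Finset.notMem_erase k _)).symm
  have hlaw : P.map (∑ i, X i) = P.map (X k) ∗ P.map (∑ i ∈ Finset.univ.erase k, X i) := by
    rw [← Finset.add_sum_erase _ X (Finset.mem_univ k),
      hk.map_add_eq_map_conv_map (hX k) (by fun_prop)]
  have hnull : P.map (∑ i, X i) {x} = 0 := by
    have := nullSingletonClass_conv (P.map (X k)) (P.map (∑ i ∈ Finset.univ.erase k, X i))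
    rw [hlaw, measure_singleton]
  rw [Measure.map_apply (by fun_prop) (measurableSet_singleton x)] at hnull
  simpa only [preimage, Finset.sum_apply, mem_singleton_iff] using hnull

end Atomless

-- `B` is the set of supporting Group 1 profiles; `T` stands in for the average of Group 2.
theorem group1_increment_duality_general {Ω ι : Type*} [MeasurableSpace Ω] {P : Measure Ω}
    {X : ι → Ω → ℝ} (hmeas : ∀ i, Measurable (X i)) (hindep : iIndepFun X P)
    {S₁ S₂ : Finset ι} (hdisj : Disjoint S₁ S₂)
    {j : ι} (hj : j ∈ S₁) (hint : Integrable (X j) P) (hmean : ∫ ω, X j ω ∂P = 0)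
    (hsymm : ∀ i ∈ S₂, (P.map (X i)).IsNegInvariant)
    {B : Set (S₁ → ℝ)} (hB : MeasurableSet B)
    {T : (S₂ → ℝ) → ℝ} (hT : Measurable T) (hodd : ∀ x, T (-x) = -T x)
    {t : ℝ} (ht : P {ω | T (fun i ↦ X i ω) = t} = 0) :
    ∫ ω in {ω | (fun i : S₁ ↦ X i ω) ∈ B} ∪ {ω | t < T (fun i ↦ X i ω)}, X j ω ∂P =
      ∫ ω in {ω | (fun i : S₁ ↦ X i ω) ∈ B} ∩ {ω | -t < T (fun i ↦ X i ω)}, X j ω ∂P := by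
  let Z : Ω → S₁ → ℝ := fun ω i ↦ X i ω
  let Y : Ω → S₂ → ℝ := fun ω i ↦ X i ω
  have hZ : Measurable Z := by fun_prop
  have hY : Measurable Y := by fun_prop
  have hTY : Measurable (T ∘ Y) := hT.comp hY
  have hZTY : IndepFun Z (T ∘ Y) P :=
    (hindep.indepFun_finset S₁ S₂ hdisj hmeas).comp measurable_id hT
  have hlaw : (P.map (T ∘ Y)).IsNegInvariant := by
    have : (P.map Y).IsNegInvariant := isNegInvariant_map_pi_of_iIndepFun
      (fun i ↦ (hmeas i).aemeasurable) (hindep.precomp Subtype.val_injective)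
      fun i ↦ hsymm i i.2
    rw [← Measure.map_map hT hY]
    exact isNegInvariant_map_of_odd hT hodd
  have hprob : P.real (T ∘ Y ⁻¹' (Ioi t)ᶜ) = P.real (T ∘ Y ⁻¹' Ioi (-t)) := by
    rw [compl_Ioi, ← map_measureReal_apply hTY measurableSet_Iic,
      ← map_measureReal_apply hTY measurableSet_Ioi, Measure.real, Measure.real,
      measure_Iic_eq_measure_Ioi_neg]
    rwa [Measure.map_apply hTY (measurableSet_singleton t)]
  have heval : AEStronglyMeasurable (fun x : S₁ → ℝ ↦ x ⟨j, hj⟩) (P.map Z) :=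
    (measurable_pi_apply _).aestronglyMeasurable
  calc ∫ ω in Z ⁻¹' B ∪ T ∘ Y ⁻¹' Ioi t, X j ω ∂P
      = P.real (T ∘ Y ⁻¹' (Ioi t)ᶜ) • ∫ ω in Z ⁻¹' B, X j ω ∂P :=
        setIntegral_preimage_union_preimage_of_indepFun hZTY hZ hTY heval hint hmean hB
          measurableSet_Ioi
    _ = P.real (T ∘ Y ⁻¹' Ioi (-t)) • ∫ ω in Z ⁻¹' B, X j ω ∂P := by rw [hprob]
    _ = ∫ ω in Z ⁻¹' B ∩ T ∘ Y ⁻¹' Ioi (-t), X j ω ∂P :=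
        (setIntegral_preimage_inter_preimage_of_indepFun hZTY hZ hTY heval hB
          measurableSet_Ioi).symm

/-- Corollary 3 (first part): with `μ = 0` and fixed `t₁`, for every `j ∈ S₁` the expected
actual capital increment of member `j` under the unanimous rejection rule with Group 2
threshold `t` equals that under the unanimous acceptance rule with Group 2 threshold `−t`. -/
theorem group1_increment_duality
    {Ω ι : Type*} [MeasureSpace Ω] [IsProbabilityMeasure (ℙ : Measure Ω)]
    (σ : ℝ) (hσ : 0 < σ)
    (X : ι → Ω → ℝ) (hmeas : ∀ j, Measurable (X j))
    (hindep : iIndepFun X ℙ)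
    (hdist : ∀ j, Measure.map (X j) ℙ = gaussianReal 0 ((σ ^ 2).toNNReal))
    (S₁ S₂ : Finset ι) (hdisj : Disjoint S₁ S₂)
    (g₁ g₂ : ℕ) (hcard₁ : S₁.card = g₁) (hcard₂ : S₂.card = g₂)
    (hg₁ : 1 ≤ g₁) (hg₂ : 1 ≤ g₂)
    (t₁ : ℝ)
    (A₁ A₂ : Ω → ℝ)
    (hA₁ : A₁ = fun ω => (g₁ : ℝ)⁻¹ * ∑ j ∈ S₁, X j ω)
    (hA₂ : A₂ = fun ω => (g₂ : ℝ)⁻¹ * ∑ j ∈ S₂, X j ω)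
    (t : ℝ) :
    ∀ j ∈ S₁,
      (∫ ω in {ω | t₁ < A₁ ω} ∪ {ω | t < A₂ ω}, X j ω) =
        (∫ ω in {ω | t₁ < A₁ ω} ∩ {ω | -t < A₂ ω}, X j ω) := by
  intro j hj
  have hlaw : HasLaw (X j) (gaussianReal 0 (σ ^ 2).toNNReal) ℙ := ⟨(hmeas j).aemeasurable, hdist j⟩
  have hsymm (i : ι) (_ : i ∈ S₂) : (Measure.map (X i) ℙ).IsNegInvariant := by
    rw [hdist i]
    infer_instance
  have hatomless (i : ι) : NullSingletonClass (Measure.map (X i) ℙ) := by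
    rw [hdist i]
    exact nullSingletonClass_gaussianReal (by positivity)
  obtain ⟨k, hk⟩ : S₂.Nonempty := Finset.card_pos.1 (by lia)
  have hnull : ℙ {ω | (g₂ : ℝ)⁻¹ * ∑ i : S₂, X i ω = t} = 0 := by
    simpa only [inv_mul_eq_iff_eq_mul₀ (show (g₂ : ℝ) ≠ 0 by positivity)] using
      measure_sum_eq_eq_zero_of_iIndepFun (fun i : S₂ ↦ hmeas i)
        (hindep.precomp Subtype.val_injective) ⟨k, hk⟩ (g₂ * t)
  simp only [hA₁, hA₂, ← Finset.sum_coe_sort S₁, ← Finset.sum_coe_sort S₂]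
  exact group1_increment_duality_general (B := {x | t₁ < (g₁ : ℝ)⁻¹ * ∑ i, x i})
    (T := fun x ↦ (g₂ : ℝ)⁻¹ * ∑ i, x i) hmeas hindep hdisj hj hlaw.hasGaussianLaw.integrable
    (hlaw.integral_eq.trans integral_id_gaussianReal) hsymm
    (measurableSet_lt measurable_const (by fun_prop)) (by fun_prop) (fun x ↦ by simp) hnull
end
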